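/- Let H be a 3-uniform hypergraph with no linear cycle and let T be a linear subtree of H. Then every edge e of H with |e ∩ V(T)| ≥ 2 contains two vertices of e ∩ V(T) that lie in a common edge of T. Consequently, every set S ⊆ V(T) such that no two vertices of S lie in a common edge of T is an independent set of H. -/

import Mathlib

/-!
Suppose an edge `e` meets `V(T)` in at least two vertices, no two of them in a common edge of `T`.
Any two vertices of a linear tree are joined by a linear path of edges of the tree
(`IsLinearTree.exists_path`, by induction on the construction of the tree). Among all pairs of
distinct vertices of `e ∩ V(T)` and all linear paths in `T` joining them, take one with the fewest
edges, say `p 0, …, p n` from `x` to `y`. Here `n ≥ 1`, since `x` and `y` share no edge of `T`.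
A vertex `w` of `e` on `p i` could replace `y` or `x` as an endpoint and give a shorter path unless
`w = x` and `i = 0`, or `w = y` and `i = n`. Hence `e` meets `p 0` exactly in `x`, `p n` exactly in
`y`, and no other `p i`, so `p 0, …, p n, e` is a linear cycle (`hasLinearCycle_of_path`).
-/

open Finset

variable {V : Type*} [Fintype V] [DecidableEq V]

/-- A linear cycle: a cyclic sequence of `k ≥ 3` distinct edges in which cyclically
consecutive edges intersect in exactly one vertex and non-consecutive edges are disjoint. -/
def HasLinearCycle (H : Finset (Finset V)) : Prop :=
  ∃ k : ℕ, 3 ≤ k ∧ ∃ e : ZMod k → Finset V,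
    Function.Injective e ∧ (∀ i, e i ∈ H) ∧
    (∀ i, (e i ∩ e (i + 1)).card = 1) ∧
    (∀ i j, i ≠ j → i + 1 ≠ j → j + 1 ≠ i → e i ∩ e j = ∅)

/-- The vertex set of a set of edges. -/
def verts (T : Finset (Finset V)) : Finset V := T.sup id

/-- A linear subtree of `H`: obtained from a single edge of `H` by repeatedly adding an
edge of `H` that intersects the set of vertices used so far in exactly one vertex. -/
inductive IsLinearTree (H : Finset (Finset V)) : Finset (Finset V) → Prop
  | single (e : Finset V) (he : e ∈ H) : IsLinearTree H {e}
  | extend (T : Finset (Finset V)) (e : Finset V) (hT : IsLinearTree H T)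
      (he : e ∈ H) (hcap : (e ∩ verts T).card = 1) : IsLinearTree H (insert e T)


set_option linter.unusedSectionVars false

/-! ### Linear paths -/

/-- `p 0, …, p n` is a linear path of edges of `T` with `x` in its first and `y` in its last edge:
consecutive edges meet in one vertex and non-consecutive ones are disjoint. The end vertices may
also lie on the neighbouring edge of the path; values `p i` with `n < i` are irrelevant. -/
structure IsLinearPath (T : Finset (Finset V)) (n : ℕ) (p : ℕ → Finset V) (x y : V) : Prop where
  mem : ∀ i ≤ n, p i ∈ T
  consec : ∀ i < n, (p i ∩ p (i + 1)).card = 1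
  disj : ∀ i j, i + 1 < j → j ≤ n → p i ∩ p j = ∅
  left : x ∈ p 0
  right : y ∈ p n

namespace IsLinearPath

theorem take {T : Finset (Finset V)} {n : ℕ} {p : ℕ → Finset V} {x y w : V}
    (h : IsLinearPath T n p x y) {i : ℕ} (hi : i ≤ n) (hw : w ∈ p i) : IsLinearPath T i p x w where
  mem j hj := h.mem j (hj.trans hi)
  consec j hj := h.consec j (by omega)
  disj j k hjk hk := h.disj j k hjk (by omega)
  left := h.left
  right := hw

theorem drop {T : Finset (Finset V)} {n : ℕ} {p : ℕ → Finset V} {x y w : V}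
    (h : IsLinearPath T n p x y) {i : ℕ} (hi : i ≤ n) (hw : w ∈ p i) :
    IsLinearPath T (n - i) (fun j => p (i + j)) w y where
  mem j hj := h.mem (i + j) (by omega)
  consec j hj := h.consec (i + j) (by omega)
  disj j k hjk hk := h.disj (i + j) (i + k) (by omega) (by omega)
  left := hw
  right := by
    have := h.right
    rwa [show n = i + (n - i) by omega] at this

theorem reverse {T : Finset (Finset V)} {n : ℕ} {p : ℕ → Finset V} {x y : V}
    (h : IsLinearPath T n p x y) : IsLinearPath T n (fun j => p (n - j)) y x where
  mem j hj := h.mem (n - j) (by omega)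
  consec j hj := by
    have := h.consec (n - (j + 1)) (by omega)
    rwa [inter_comm, show n - (j + 1) + 1 = n - j by omega] at this
  disj j k hjk hk := by
    have := h.disj (n - k) (n - j) (by omega) (by omega)
    rwa [inter_comm] at this
  left := h.right
  right := by simpa using h.left

theorem single {T : Finset (Finset V)} {e : Finset V} {x y : V} (he : e ∈ T) (hx : x ∈ e)
    (hy : y ∈ e) : IsLinearPath T 0 (fun _ => e) x y where
  mem _ _ := he
  consec _ hi := by omega
  disj _ _ _ _ := by omega
  left := hx
  right := hy

theorem mono {T T' : Finset (Finset V)} {n : ℕ} {p : ℕ → Finset V} {x y : V}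
    (h : IsLinearPath T n p x y) (hT : T ⊆ T') : IsLinearPath T' n p x y :=
  { h with mem := fun i hi => hT (h.mem i hi) }

end IsLinearPath

/-! ### Paths in linear trees -/

theorem mem_verts {T : Finset (Finset V)} {x : V} : x ∈ verts T ↔ ∃ f ∈ T, x ∈ f := by
  simp [verts, Finset.mem_sup]

theorem IsLinearTree.subset {H T : Finset (Finset V)} (hT : IsLinearTree H T) : T ⊆ H := by
  induction hT with
  | single e he => simpa using he
  | extend T e hT he hcap ih => exact insert_subset he ih

/-- A path of a tree ending in the vertex where a new edge is attached, once cut at the first edge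
containing that vertex, can be prolonged by the new edge. -/
theorem IsLinearPath.exists_snoc {T : Finset (Finset V)} {n : ℕ} {p : ℕ → Finset V} {x y v : V}
    {e : Finset V} (h : IsLinearPath T n p x v) (hv : e ∩ verts T = {v}) (hy : y ∈ e) :
    ∃ m q, IsLinearPath (insert e T) m q x y := by
  classical
  have hex : ∃ i, v ∈ p i := ⟨n, h.right⟩
  obtain ⟨m, hvm, hmin⟩ : ∃ m, v ∈ p m ∧ ∀ i < m, v ∉ p i :=
    ⟨Nat.find hex, Nat.find_spec hex, fun i hi => Nat.find_min hex hi⟩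
  have hmn : m ≤ n := by
    by_contra hlt
    exact hmin n (by omega) h.right
  have h' := h.take hmn hvm
  have hve : v ∈ e := (mem_inter.1 (hv ▸ mem_singleton_self v)).1
  have hsub : ∀ i ≤ m, ∀ w ∈ p i, w ∈ e → w = v := fun i hi w hw hwe =>
    mem_singleton.1 (hv ▸ mem_inter.2 ⟨hwe, mem_verts.2 ⟨p i, h'.mem i hi, hw⟩⟩)
  refine ⟨m + 1, fun i => if i ≤ m then p i else e, ?_, ?_, ?_, ?_, ?_⟩
  · intro i _
    split_ifs with hi
    · exact mem_insert_of_mem (h'.mem i hi)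
    · exact mem_insert_self _ _
  · intro i hi
    rw [if_pos (by omega : i ≤ m)]
    split_ifs with hi'
    · exact h'.consec i (by omega)
    · obtain rfl : i = m := by omega
      refine card_eq_one.2 ⟨v, ?_⟩
      ext w
      rw [mem_inter, mem_singleton]
      exact ⟨fun hw => hsub i le_rfl w hw.1 hw.2, by rintro rfl; exact ⟨hvm, hve⟩⟩
  · intro i j hij hj
    rw [if_pos (by omega : i ≤ m)]
    split_ifs with hj'
    · exact h'.disj i j hij hj'
    · refine eq_empty_of_forall_notMem fun w hw => ?_
      rw [mem_inter] at hw
      have hwv := hsub i (by omega) w hw.1 hw.2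
      exact hmin i (by omega) (hwv ▸ hw.1)
  · simpa using h'.left
  · simpa using hy

theorem IsLinearTree.exists_path {H T : Finset (Finset V)} (hT : IsLinearTree H T) {x y : V}
    (hx : x ∈ verts T) (hy : y ∈ verts T) : ∃ n p, IsLinearPath T n p x y := by
  induction hT generalizing x y with
  | single e he =>
    simp only [mem_verts, mem_singleton, exists_eq_left] at hx hy
    exact ⟨0, _, .single (mem_singleton_self e) hx hy⟩
  | extend T e hT he hcap ih =>
    obtain ⟨v, hv⟩ := card_eq_one.1 hcap
    have hvT : v ∈ verts T := (mem_inter.1 (hv ▸ mem_singleton_self v)).2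
    have key : ∀ {z : V}, z ∈ verts (insert e T) → z ∈ e ∨ z ∈ verts T := by
      intro z hz
      simpa [mem_verts] using hz
    rcases key hx with hx | hx <;> rcases key hy with hy | hy
    · exact ⟨0, _, .single (mem_insert_self e T) hx hy⟩
    · obtain ⟨n, p, hp⟩ := ih hy hvT
      obtain ⟨m, q, hq⟩ := hp.exists_snoc hv hx
      exact ⟨m, _, hq.reverse⟩
    · obtain ⟨n, p, hp⟩ := ih hx hvT
      exact hp.exists_snoc hv hy
    · obtain ⟨n, p, hp⟩ := ih hx hy
      exact ⟨n, p, hp.mono (subset_insert e T)⟩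

/-! ### Closing a path to a cycle -/

/-- A linear path with at least two edges closes up to a linear cycle through an edge meeting the
first and the last edge of the path in one vertex each, and no other edge of the path. -/
theorem hasLinearCycle_of_path {H : Finset (Finset V)} (h3 : ∀ e ∈ H, e.card = 3) {n : ℕ}
    {p : ℕ → Finset V} {x y : V} (h : IsLinearPath H n p x y) (hn : 1 ≤ n) {e : Finset V}
    (he : e ∈ H) (h0 : (e ∩ p 0).card = 1) (hlast : (e ∩ p n).card = 1)
    (hmid : ∀ i, 0 < i → i < n → e ∩ p i = ∅) : HasLinearCycle H := by
  obtain ⟨q, hq⟩ : ∃ q : ℕ → Finset V, q = fun i => if i ≤ n then p i else e := ⟨_, rfl⟩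
  have qlo : ∀ i ≤ n, q i = p i := fun i hi => by simp [hq, hi]
  have qhi : q (n + 1) = e := by simp [hq]
  have qmem : ∀ i ≤ n + 1, q i ∈ H := by
    intro i hi
    rcases Nat.lt_or_ge n i with h' | h'
    · obtain rfl : i = n + 1 := by omega
      rwa [qhi]
    · rw [qlo i h']
      exact h.mem i h'
  have qcon : ∀ i ≤ n, (q i ∩ q (i + 1)).card = 1 := by
    intro i hi
    rcases hi.lt_or_eq with h' | rfl
    · rw [qlo i hi, qlo (i + 1) h']
      exact h.consec i h'
    · rwa [qlo i le_rfl, qhi, inter_comm]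
  have qwrap : (q (n + 1) ∩ q 0).card = 1 := by rwa [qhi, qlo 0 (Nat.zero_le n)]
  have qdis : ∀ i j, i + 1 < j → j ≤ n + 1 → ¬ (i = 0 ∧ j = n + 1) → q i ∩ q j = ∅ := by
    intro i j hij hj hne
    rcases Nat.lt_or_ge n j with h' | h'
    · obtain rfl : j = n + 1 := by omega
      rw [qhi, qlo i (by omega), inter_comm]
      exact hmid i (by omega) (by omega)
    · rw [qlo i (by omega), qlo j h']
      exact h.disj i j hij h'
  -- Distinct edges of the sequence share at most one vertex, while an edge has three.
  have qne : ∀ i j, i < j → j ≤ n + 1 → q i ≠ q j := by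
    intro i j hij hj heq
    have hc := h3 _ (qmem j hj)
    have hle : (q i ∩ q j).card ≤ 1 := by
      by_cases h1 : i + 1 = j
      · subst h1
        exact (qcon i (by omega)).le
      · by_cases h2 : i = 0 ∧ j = n + 1
        · rw [h2.1, h2.2, inter_comm]
          exact qwrap.le
        · simp [qdis i j (by omega) hj h2]
    rw [heq, inter_self] at hle
    omega
  have vlt : ∀ i : ZMod (n + 2), i.val ≤ n + 1 := fun i => by
    have := ZMod.val_lt i
    omega
  have vinj : ∀ i j : ZMod (n + 2), i.val = j.val → i = j := fun i j hij =>
    ZMod.val_injective (n + 2) hij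
  have vone : (1 : ZMod (n + 2)).val = 1 := by
    have : Fact (1 < n + 2) := ⟨by omega⟩
    exact ZMod.val_one (n + 2)
  have vsucc : ∀ i : ZMod (n + 2), i.val ≤ n → (i + 1).val = i.val + 1 := fun i hi => by
    rw [ZMod.val_add_of_lt (by omega), vone]
  have vlast : ∀ i : ZMod (n + 2), i.val = n + 1 → (i + 1).val = 0 := fun i hi => by
    rw [ZMod.val_add, vone, hi, Nat.mod_self]
  have dis : ∀ i j : ZMod (n + 2), i.val < j.val → i + 1 ≠ j → j + 1 ≠ i →
      q i.val ∩ q j.val = ∅ := by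
    intro i j hlt h1 h2
    have := vlt j
    refine qdis _ _ ?_ this ?_
    · by_contra hcon
      exact h1 (vinj _ _ (by rw [vsucc i (by omega)]; omega))
    · rintro ⟨hi0, hjn⟩
      exact h2 (vinj _ _ (by rw [vlast j hjn, hi0]))
  refine ⟨n + 2, by omega, fun i => q i.val, ?_, fun i => qmem _ (vlt i), ?_, ?_⟩
  · intro i j hij
    rcases lt_trichotomy i.val j.val with h' | h' | h'
    · exact absurd hij (qne _ _ h' (vlt j))
    · exact vinj _ _ h'
    · exact absurd hij.symm (qne _ _ h' (vlt i))
  · intro i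
    dsimp only
    rcases (vlt i).lt_or_eq with h' | h'
    · rw [vsucc i (by omega)]
      exact qcon _ (by omega)
    · rw [vlast i h', h']
      exact qwrap
  · intro i j hne h1 h2
    dsimp only
    rcases lt_trichotomy i.val j.val with h' | h' | h'
    · exact dis i j h' h1 h2
    · exact absurd (vinj _ _ h') hne
    · rw [inter_comm]
      exact dis j i h' h2 h1

/-! ### The shortest path between vertices of an edge -/

theorem exists_common_edge {H T : Finset (Finset V)} (h3 : ∀ e ∈ H, e.card = 3)
    (hnc : ¬ HasLinearCycle H) (hT : IsLinearTree H T) {e : Finset V} (he : e ∈ H)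
    (h2 : 2 ≤ (e ∩ verts T).card) :
    ∃ x ∈ e ∩ verts T, ∃ y ∈ e ∩ verts T, x ≠ y ∧ ∃ f ∈ T, x ∈ f ∧ y ∈ f := by
  classical
  have hex : ∃ n, ∃ x ∈ e ∩ verts T, ∃ y ∈ e ∩ verts T, x ≠ y ∧ ∃ p, IsLinearPath T n p x y := by
    obtain ⟨x, hx, y, hy, hxy⟩ := one_lt_card.1 h2
    obtain ⟨n, p, hp⟩ := hT.exists_path (mem_inter.1 hx).2 (mem_inter.1 hy).2
    exact ⟨n, x, hx, y, hy, hxy, p, hp⟩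
  obtain ⟨n, ⟨x, hx, y, hy, hxy, p, hp⟩, hmin⟩ :
      ∃ n, (∃ x ∈ e ∩ verts T, ∃ y ∈ e ∩ verts T, x ≠ y ∧ ∃ p, IsLinearPath T n p x y) ∧
        ∀ m < n, ¬ ∃ x ∈ e ∩ verts T, ∃ y ∈ e ∩ verts T, x ≠ y ∧ ∃ p, IsLinearPath T m p x y :=
    ⟨Nat.find hex, Nat.find_spec hex, fun m hm => Nat.find_min hex hm⟩
  rcases Nat.eq_zero_or_pos n with rfl | hn
  · exact ⟨x, hx, y, hy, hxy, p 0, hp.mem 0 le_rfl, hp.left, hp.right⟩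
  exfalso
  have htake : ∀ i ≤ n, ∀ w ∈ p i, w ∈ e → w ≠ x → i = n := by
    intro i hi w hw hwe hwx
    by_contra hne
    exact hmin i (by omega) ⟨x, hx, w, mem_inter.2 ⟨hwe, mem_verts.2 ⟨_, hp.mem i hi, hw⟩⟩,
      hwx.symm, p, hp.take hi hw⟩
  have hdrop : ∀ i ≤ n, ∀ w ∈ p i, w ∈ e → w ≠ y → i = 0 := by
    intro i hi w hw hwe hwy
    by_contra hne
    exact hmin (n - i) (by omega) ⟨w, mem_inter.2 ⟨hwe, mem_verts.2 ⟨_, hp.mem i hi, hw⟩⟩, y, hy,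
      hwy, _, hp.drop hi hw⟩
  have hxe := (mem_inter.1 hx).1
  have hye := (mem_inter.1 hy).1
  refine hnc (hasLinearCycle_of_path h3 (hp.mono hT.subset) hn he ?_ ?_ ?_)
  · refine card_eq_one.2 ⟨x, ?_⟩
    ext w
    rw [mem_inter, mem_singleton]
    refine ⟨fun hw => ?_, by rintro rfl; exact ⟨hxe, hp.left⟩⟩
    by_contra hwx
    have := htake 0 (by omega) w hw.2 hw.1 hwx
    omega
  · refine card_eq_one.2 ⟨y, ?_⟩
    ext w
    rw [mem_inter, mem_singleton]
    refine ⟨fun hw => ?_, by rintro rfl; exact ⟨hye, hp.right⟩⟩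
    by_contra hwy
    have := hdrop n le_rfl w hw.2 hw.1 hwy
    omega
  · intro i hi0 hin
    refine eq_empty_of_forall_notMem fun w hw => ?_
    rw [mem_inter] at hw
    by_cases hwx : w = x
    · have := hdrop i hin.le w hw.2 hw.1 (hwx ▸ hxy)
      omega
    · have := htake i hin.le w hw.2 hw.1 hwx
      omega

/-- If `H` has no linear cycle and `T` is a linear subtree of `H`, then every edge of `H`
meeting `V(T)` in at least two vertices contains two vertices of the intersection lying
in a common edge of `T`; consequently, every subset of `V(T)` no two of whose vertices
lie in a common edge of `T` is independent in `H`. -/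
theorem edge_meets_tree_in_common_edge (H T : Finset (Finset V))
    (h3 : ∀ e ∈ H, e.card = 3) (hnc : ¬ HasLinearCycle H)
    (hT : IsLinearTree H T) :
    (∀ e ∈ H, 2 ≤ (e ∩ verts T).card →
      ∃ x ∈ e ∩ verts T, ∃ y ∈ e ∩ verts T, x ≠ y ∧ ∃ f ∈ T, x ∈ f ∧ y ∈ f) ∧
    (∀ S : Finset V, S ⊆ verts T →
      (∀ x ∈ S, ∀ y ∈ S, x ≠ y → ∀ f ∈ T, ¬(x ∈ f ∧ y ∈ f)) →
      ∀ e ∈ H, ¬ e ⊆ S) := by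
  have main := fun e (he : e ∈ H) (h2 : 2 ≤ (e ∩ verts T).card) =>
    exists_common_edge h3 hnc hT he h2
  refine ⟨main, fun S hS hind e he heS => ?_⟩
  have h2 : 2 ≤ (e ∩ verts T).card := by
    rw [inter_eq_left.2 (heS.trans hS), h3 e he]
    omega
  obtain ⟨x, hx, y, hy, hxy, f, hf, hxf, hyf⟩ := main e he h2
  exact hind x (heS (mem_inter.1 hx).1) y (heS (mem_inter.1 hy).1) hxy f hf ⟨hxf, hyf⟩
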